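/- Let A be a finite-dimensional real affine space over V with dim V = n, let g be a symmetric bilinear form on V, and let (R_0, …, R_n) be an affine basis of A. Set D_{ij} = g(R_j − R_i, R_j − R_i). Then for all points P, Q ∈ A with barycentric coordinates (p_0, …, p_n) and (q_0, …, q_n) respectively: g(Q − P, Q − P) = −(1/2)·Σ_{i,j} (q_i − p_i)(q_j − p_j)·D_{ij}. -/

import Mathlib

/-!
Put `u i = R_i - P` and `c i = q_i - p_i`, so that `∑ c i = 0` and `Q - P = ∑ c i • u i`.
Since `R_j - R_i = u j - u i`, expanding gives
`D i j = g (u j) (u j) - 2 g (u i) (u j) + g (u i) (u i)`. In the double sum weighted by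
`c i * c j` the two diagonal terms vanish because `∑ c i = 0`, and the cross term contributes
`-2 g (Q - P) (Q - P)`.
-/

/-- The identity in vector form: for weights of total zero, a symmetric form is determined on
`∑ c i • u i` by the squared distances between the `u i`. -/
theorem bilin_sum_smul_self_of_sum_eq_zero {V ι : Type*} [AddCommGroup V] [Module ℝ V] [Fintype ι]
    (g : LinearMap.BilinForm ℝ V) (hgs : ∀ x y, g x y = g y x) (c : ι → ℝ) (hc : ∑ i, c i = 0)
    (u : ι → V) :
    g (∑ i, c i • u i) (∑ i, c i • u i) =
      -(1/2 : ℝ) * ∑ i, ∑ j, c i * c j * g (u j - u i) (u j - u i) := by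
  have expand : ∀ i j, c i * c j * g (u j - u i) (u j - u i) =
      c i * (c j * g (u j) (u j)) + (c i * g (u i) (u i)) * c j
        - 2 * (c i * (c j * g (u j) (u i))) := by
    intro i j
    simp only [map_sub, LinearMap.sub_apply]
    rw [hgs (u i) (u j)]
    ring
  simp only [expand, Finset.sum_sub_distrib, Finset.sum_add_distrib, ← Finset.mul_sum,
    ← Finset.sum_mul, hc]
  simp only [map_sum, map_smul, LinearMap.sum_apply, LinearMap.smul_apply, smul_eq_mul]
  ring

/-- Let `(R_0, …, R_n)` be an affine basis of an `n`-dimensional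
real affine space `A` and `g` a symmetric bilinear form on `V`.  With
`D i j = g(R_j − R_i, R_j − R_i)`, for all `P, Q ∈ A` with barycentric coordinates
`p`, `q`: `g(Q − P, Q − P) = −(1/2)·Σ_{i,j} (q_i − p_i)(q_j − p_j)·D i j`. -/
theorem stmt13 {V A : Type*} [AddCommGroup V] [Module ℝ V] [AddTorsor V A]
    [FiniteDimensional ℝ V] {n : ℕ} (hn : Module.finrank ℝ V = n)
    (b : AffineBasis (Fin (n + 1)) ℝ A)
    (g : LinearMap.BilinForm ℝ V) (hgs : ∀ x y, g x y = g y x) (P Q : A) :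
    g (Q -ᵥ P) (Q -ᵥ P) =
      -(1/2 : ℝ) * ∑ i : Fin (n + 1), ∑ j : Fin (n + 1),
        (b.coord i Q - b.coord i P) * (b.coord j Q - b.coord j P) *
          g (b j -ᵥ b i) (b j -ᵥ b i) := by
  have hsum (X : A) : ∑ i, b.coord i X • (b i -ᵥ P) = X -ᵥ P := by
    rw [Finset.sum_smul_vsub_const_eq_affineCombination_vsub _ _ _ _ (b.sum_coord_apply_eq_one X),
      b.affineCombination_coord_eq_self]
  have hQP : Q -ᵥ P = ∑ i, (b.coord i Q - b.coord i P) • (b i -ᵥ P) := by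
    simp only [sub_smul, Finset.sum_sub_distrib, hsum, vsub_self, sub_zero]
  have hc : ∑ i, (b.coord i Q - b.coord i P) = 0 := by
    simp only [Finset.sum_sub_distrib, b.sum_coord_apply_eq_one, sub_self]
  rw [hQP, bilin_sum_smul_self_of_sum_eq_zero g hgs _ hc]
  simp only [vsub_sub_vsub_cancel_right]
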